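/- For every 0 ≤ α < 2 there exists a pair of locally finite positive Borel measures σ, ω on ℝ² such that the fractional Muckenhoupt constants A₂^α and A₂^{α,*} are finite, the energy constants E₂^α and E₂^{α,*} are finite, but the fractional-integral off-testing constant T_{off,α} is infinite. -/

import Mathlib

/-!
The off-testing integral can diverge for a measure `ω` that is spread over a Cantor set while all
Muckenhoupt and energy constants stay finite.

Write `d = 2 - α ∈ (0, 2]`. Let `ω` be the uniform measure on the Cantor set of points
`∑ b_k g_k`, `b ∈ {0,1}^ℕ`, on the vertical axis, where the gaps `g_k = 2^{-M k²}` decay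
superexponentially (`M` is large depending on `d`). Let `σ` have one atom for each finite word `v`
of length `j`, of mass `2^j g_j^{2d}`, at distance `g_j` from the part of the Cantor set coded by
`v` (the cluster of `v`), which has diameter comparable to `g_j` and `ω`-measure `2^{-j}`.

* Off-testing fails (`offTest_tree_cantor`): the fractional integral of `ω` at an atom of
  generation `j` is at least a multiple of `2^{-j} g_j^{-d}`, so such an atom contributes at least a
  multiple of `2^{-j}`, and there are `2^j` atoms in each of the infinitely many generations.

* Everything else is governed by two estimates for the atoms `p_i` of mass `s_i`: the bound
  `s_i ∫ |p_i - y|^{-2d} dω(y) ≤ C` (`mass_integral_le`) and the smallness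
  `s_i |p_i - p_j|^{-2d} ≤ (τ_i τ_j)²` with summable `τ` for pairs `s_i ≤ s_j`
  (`mass_pair_le`), which holds because the gaps decrease so rapidly. By expanding the square, they
  yield the testing inequality for the fractional integral of `σ` (`testing_atoms`), which in turn
  bounds `E₂^α` (`energyConst_le_of_testing`). Comparing the atoms in a cube with the heaviest one
  there, they bound the dual constants `E₂^{α,*}` (`energyConst_atoms_le`) and `A₂^{α,*}`
  (`muckA2_atoms_le`).

* The constant `A₂^α` is finite by a direct argument (`muckA2_tree_cantor_ne_top`): in a cube with
  `ω`-mass `a`, only one atom per generation is not negligible, it contributes about `a 2^j`, and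
  only generations with `a 2^j ≤ 1` occur.
-/

open MeasureTheory Set ENNReal

noncomputable section

/-- The plane `ℝ²` with the Euclidean metric. -/
abbrev Plane := EuclideanSpace ℝ (Fin 2)

/-- Half-open axis-parallel cube with center `c` and half-side `h` (side length `2h`). -/
def cube (c : Plane) (h : ℝ) : Set Plane := {x | ∀ i, c i - h ≤ x i ∧ x i < c i + h}

/-- The reproducing Poisson integral `𝒫^α(Q,μ)` of the cube with center `c` and
side length `2h`. -/
def reprPoisson (α : ℝ) (c : Plane) (h : ℝ) (μ : Measure Plane) : ℝ≥0∞ :=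
  ∫⁻ x, ENNReal.ofReal ((2 * h / (2 * h + dist x c) ^ 2) ^ (2 - α)) ∂μ

/-- The standard Poisson integral `P^α(Q,μ)` of the cube with center `c` and
side length `2h`. -/
def stdPoisson (α : ℝ) (c : Plane) (h : ℝ) (μ : Measure Plane) : ℝ≥0∞ :=
  ∫⁻ x, ENNReal.ofReal (2 * h / (2 * h + dist x c) ^ (3 - α)) ∂μ

/-- The fractional Muckenhoupt constant `A₂^α(σ,ω)`; the dual constant `A₂^{α,*}`
is obtained by interchanging the measures. -/
def muckA2 (α : ℝ) (σ ω : Measure Plane) : ℝ≥0∞ :=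
  ⨆ (c : Plane) (h : ℝ) (_ : 0 < h),
    reprPoisson α c h (σ.restrict (cube c h)ᶜ) * ω (cube c h) /
      ENNReal.ofReal (((2 * h) ^ 2) ^ (1 - α / 2))

/-- `m^μ_S`: the `μ`-average of `x` over `S`. -/
def mMean (μ : Measure Plane) (S : Set Plane) : Plane :=
  (μ S).toReal⁻¹ • ∫ x in S, x ∂μ

/-- The energy constant `(E₂^α)²(σ,ω)`: the supremum over axis-parallel cubes `Q`
and countable decompositions of `Q` into pairwise disjoint subcubes of
`σ(Q)⁻¹ Σ_r (P^α(Q_r, 1_Q σ)/|Q_r|^{1/2})² ‖x - m^ω_{Q_r}‖²_{L²(1_{Q_r}ω)}`.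
The dual constant `(E₂^{α,*})²` is obtained by interchanging the measures. -/
def energyConst (α : ℝ) (σ ω : Measure Plane) : ℝ≥0∞ :=
  ⨆ (c : Plane) (h : ℝ) (_ : 0 < h) (cr : ℕ → Plane) (hr : ℕ → ℝ) (_ : ∀ r, 0 ≤ hr r)
    (_ : ∀ r, cube (cr r) (hr r) ⊆ cube c h)
    (_ : Pairwise (Function.onFun Disjoint fun r => cube (cr r) (hr r)))
    (_ : cube c h = ⋃ r, cube (cr r) (hr r)),
    (σ (cube c h))⁻¹ *
      ∑' r : ℕ,
        (stdPoisson α (cr r) (hr r) (σ.restrict (cube c h)) / ENNReal.ofReal (2 * hr r)) ^ 2 *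
          ∫⁻ x in cube (cr r) (hr r),
            ENNReal.ofReal (dist x (mMean ω (cube (cr r) (hr r))) ^ 2) ∂ω

/-- The off-testing constant `T²_{off,α}` for the fractional integral `I^α`. -/
def offTest (α : ℝ) (σ ω : Measure Plane) : ℝ≥0∞ :=
  ⨆ (c : Plane) (h : ℝ) (_ : 0 < h),
    (ω (cube c h))⁻¹ *
      ∫⁻ x in (cube c h)ᶜ,
        (∫⁻ y in cube c h, ENNReal.ofReal (dist x y ^ (α - 2)) ∂ω) ^ 2 ∂σ

/-! ### Kernels, cubes and Poisson integrals -/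

/-- The fractional kernel `|x - y|^{-d}`, equal to `∞` on the diagonal when `d > 0`. In the
application `d = 2 - α`. -/
def ker (d : ℝ) (x y : Plane) : ℝ≥0∞ := edist x y ^ (-d)

/-- The scale `2h + |y - c|` at which the cube with center `c` and side length `2h` sees the
point `y`; both Poisson integrals are integrals of powers of it. -/
def scl (c : Plane) (h : ℝ) (y : Plane) : ℝ≥0∞ := ENNReal.ofReal (2 * h + dist y c)

lemma rpow_neg_anti {a b : ℝ≥0∞} {d : ℝ} (hd : 0 ≤ d) (hab : a ≤ b) : b ^ (-d) ≤ a ^ (-d) := by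
  rw [ENNReal.rpow_neg, ENNReal.rpow_neg]
  exact ENNReal.inv_le_inv.2 (ENNReal.rpow_le_rpow hab hd)

lemma ker_comm (d : ℝ) (x y : Plane) : ker d x y = ker d y x := by
  simp [ker, edist_comm]

lemma measurable_ker (d : ℝ) (x : Plane) : Measurable (ker d x) := by
  unfold ker; fun_prop

lemma measurableSet_cube (c : Plane) (h : ℝ) : MeasurableSet (cube c h) := by
  have : cube c h = ⋂ i, {x : Plane | c i - h ≤ x i ∧ x i < c i + h} := by
    ext x; simp [cube]
  rw [this]
  refine MeasurableSet.iInter fun i => ?_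
  have hi : Measurable fun x : Plane => x i := by fun_prop
  exact (measurableSet_le measurable_const hi).inter (measurableSet_lt hi measurable_const)

lemma cube_eq_empty {c : Plane} {h : ℝ} (hh : h ≤ 0) : cube c h = ∅ := by
  ext x
  simp only [cube, mem_ofPred_eq, mem_empty_iff_false, iff_false]
  intro H
  have := H 0
  linarith [this.1, this.2]

/-- The Euclidean distance is at most twice the sup distance. -/
lemma plane_dist_le {x y : Plane} {a : ℝ} (ha : 0 ≤ a) (h : ∀ i, |x i - y i| ≤ a) :
    dist x y ≤ 2 * a := by
  rw [EuclideanSpace.dist_eq, Fin.sum_univ_two]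
  apply Real.sqrt_le_iff.2 ⟨by linarith, ?_⟩
  have h0 := sq_le_sq' (abs_le.1 (h 0)).1 (abs_le.1 (h 0)).2
  have h1 := sq_le_sq' (abs_le.1 (h 1)).1 (abs_le.1 (h 1)).2
  simp only [Real.dist_eq, sq_abs]
  nlinarith [sq_nonneg a]

lemma abs_coord_le_dist (x y : Plane) (i : Fin 2) : |x i - y i| ≤ dist x y := by
  rw [dist_eq_norm]
  simpa using PiLp.norm_apply_le (x - y) i

lemma dist_center_le {c x : Plane} {h : ℝ} (hx : x ∈ cube c h) : dist x c ≤ 2 * h := by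
  have h0 : 0 ≤ h := by
    by_contra! hn
    rw [cube_eq_empty hn.le] at hx
    exact hx
  refine plane_dist_le h0 fun i => ?_
  have := hx i
  rw [abs_le]; constructor <;> linarith [this.1, this.2]

lemma dist_le_of_mem_cube {c x y : Plane} {h : ℝ} (hx : x ∈ cube c h) (hy : y ∈ cube c h) :
    dist x y ≤ 2 * (2 * h) := by
  have h0 : 0 ≤ h := by
    by_contra! hn
    rw [cube_eq_empty hn.le] at hx
    exact hx
  refine plane_dist_le (by linarith) fun i => ?_
  have := hx i
  have := hy i
  rw [abs_le]; constructor <;> linarith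

lemma edist_le_scl {c x : Plane} {h : ℝ} (hx : x ∈ cube c h) (y : Plane) :
    edist y x ≤ scl c h y := by
  rw [scl, edist_dist]
  apply ENNReal.ofReal_le_ofReal
  have := dist_center_le hx
  have := dist_triangle_right y x c
  linarith

lemma side_le_scl (c : Plane) {h : ℝ} (y : Plane) :
    ENNReal.ofReal (2 * h) ≤ scl c h y :=
  ENNReal.ofReal_le_ofReal (by linarith [dist_nonneg (x := y) (y := c)])

lemma edist_le_two_side {c x x' : Plane} {h : ℝ} (hx : x ∈ cube c h) (hx' : x' ∈ cube c h) :
    edist x x' ≤ 2 * ENNReal.ofReal (2 * h) := by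
  calc edist x x' = ENNReal.ofReal (dist x x') := edist_dist _ _
    _ ≤ ENNReal.ofReal (2 * (2 * h)) := ENNReal.ofReal_le_ofReal (dist_le_of_mem_cube hx hx')
    _ = 2 * ENNReal.ofReal (2 * h) := by
      rw [ENNReal.ofReal_mul (by norm_num), ENNReal.ofReal_ofNat]

/-- The `A₂` quotient rewritten with the powers of the side length cancelled:
`((2h)²)^{1-α/2} = (2h)^{2-α}`. -/
lemma reprPoisson_div {α : ℝ} (c : Plane) {h : ℝ} (hh : 0 < h) (μ : Measure Plane)
    (a : ℝ≥0∞) :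
    reprPoisson α c h μ * a / ENNReal.ofReal (((2 * h) ^ 2) ^ (1 - α / 2)) =
      a * ∫⁻ x, (scl c h x ^ (-(2 - α))) ^ 2 ∂μ := by
  have hb : 0 < ((2 * h) ^ 2) ^ (1 - α / 2) := by positivity
  rw [mul_comm, mul_div_assoc]
  congr 1
  rw [reprPoisson, div_eq_mul_inv, ← lintegral_mul_const' _ _ (by simp [hb])]
  congr 1
  ext x
  have hD : 0 < 2 * h + dist x c := by positivity
  rw [scl, ENNReal.ofReal_rpow_of_pos hD, ← ENNReal.ofReal_inv_of_pos hb,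
    ← ENNReal.ofReal_mul (by positivity), ← ENNReal.ofReal_pow (by positivity)]
  congr 1
  have e1 : ((2 * h) ^ 2) ^ (1 - α / 2) = (2 * h) ^ (2 - α) := by
    rw [← Real.rpow_natCast, ← Real.rpow_mul (by positivity)]
    congr 1; push_cast; ring
  rw [e1, Real.div_rpow (by positivity) (by positivity), Real.rpow_neg hD.le,
    ← Real.rpow_pow_comm hD.le]
  have : 0 < (2 * h) ^ (2 - α) := by positivity
  have : 0 < (2 * h + dist x c) ^ (2 - α) := by positivity
  field_simp

lemma stdPoisson_div {α : ℝ} (c : Plane) {h : ℝ} (hh : 0 < h) (μ : Measure Plane) :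
    stdPoisson α c h μ / ENNReal.ofReal (2 * h) = ∫⁻ x, scl c h x ^ (-(2 - α + 1)) ∂μ := by
  rw [stdPoisson, div_eq_mul_inv, ← lintegral_mul_const' _ _ (by simp [hh])]
  congr 1
  ext x
  have hD : 0 < 2 * h + dist x c := by positivity
  rw [scl, ENNReal.ofReal_rpow_of_pos hD, ← ENNReal.ofReal_inv_of_pos (by positivity),
    ← ENNReal.ofReal_mul (by positivity)]
  congr 1
  rw [Real.rpow_neg hD.le, show 2 - α + 1 = 3 - α by ring]
  have : 0 < (2 * h + dist x c) ^ (3 - α) := by positivity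
  field_simp

/-- Points of a cube are no farther from `y` than the scale `scl c h y`, so the Poisson kernel
is dominated by the fractional kernel at any point of the cube. -/
lemma scl_rpow_le_ker {d : ℝ} (hd : 0 ≤ d) {c x : Plane} {h : ℝ} (hx : x ∈ cube c h) (y : Plane) :
    scl c h y ^ (-d) ≤ ker d y x :=
  rpow_neg_anti hd (edist_le_scl hx y)

/-- The Cauchy-Schwarz inequality against the constant `1`. -/
lemma sq_lintegral_le {β : Type*} [MeasurableSpace β] (μ : Measure β) {f : β → ℝ≥0∞}
    (hf : AEMeasurable f μ) : (∫⁻ x, f x ∂μ) ^ 2 ≤ μ univ * ∫⁻ x, f x ^ 2 ∂μ := by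
  have := ENNReal.lintegral_mul_le_Lp_mul_Lq μ Real.HolderConjugate.two_two
    hf (aemeasurable_const (b := (1 : ℝ≥0∞)))
  simp only [Pi.mul_apply, mul_one, ENNReal.one_rpow, lintegral_const, one_mul] at this
  calc (∫⁻ x, f x ∂μ) ^ 2 ≤ _ := pow_le_pow_left' this 2
    _ = _ := by
      rw [mul_pow, ← ENNReal.rpow_natCast, ← ENNReal.rpow_mul, ← ENNReal.rpow_natCast,
        ← ENNReal.rpow_mul]
      norm_num
      rw [mul_comm]

/-- Up to a factor, the mean minimizes the second moment: any other base point `a` may be used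
instead. -/
lemma lintegral_sub_mean_le (μ : Measure Plane) [IsFiniteMeasure μ] (c : Plane) (h : ℝ) (a : Plane) :
    ∫⁻ x in cube c h, ENNReal.ofReal (dist x (mMean μ (cube c h)) ^ 2) ∂μ ≤
      4 * ∫⁻ x in cube c h, edist x a ^ 2 ∂μ := by
  set S := cube c h
  set ν := μ.restrict S
  by_cases hS : μ S = 0
  · have : ν = 0 := Measure.restrict_eq_zero.2 hS
    simp [this]
  have hSt : μ S ≠ ⊤ := measure_ne_top _ _
  have hid : Integrable (fun x : Plane => x) ν := by
    refine Measure.integrableOn_of_bounded (M := 2 * h + ‖c‖) hSt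
      (by fun_prop) ?_
    filter_upwards [ae_restrict_mem (measurableSet_cube c h)] with x hx
    have := dist_center_le hx
    have := norm_le_norm_add_norm_sub' x c
    rw [dist_eq_norm] at *
    linarith
  have hm : mMean μ S - a = (μ S).toReal⁻¹ • ∫ x, (x - a) ∂ν := by
    rw [integral_sub hid (integrable_const a), smul_sub, integral_const, mMean]
    congr 1
    have : ν.real univ = (μ S).toReal := by simp [ν, Measure.real]
    rw [this, smul_smul, inv_mul_cancel₀ (ENNReal.toReal_ne_zero.2 ⟨hS, hSt⟩), one_smul]
  have hme : edist (mMean μ S) a ≤ (μ S)⁻¹ * ∫⁻ x, edist x a ∂ν := by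
    rw [edist_eq_enorm_sub, hm, enorm_smul]
    have e : ‖(μ S).toReal⁻¹‖ₑ = (μ S)⁻¹ := by
      rw [Real.enorm_eq_ofReal (by positivity), ENNReal.ofReal_inv_of_pos
        (ENNReal.toReal_pos hS hSt), ENNReal.ofReal_toReal hSt]
    rw [e]
    gcongr
    simpa only [edist_eq_enorm_sub] using enorm_integral_le_lintegral_enorm (μ := ν) (fun x => x - a)
  have hm2 : μ S * edist (mMean μ S) a ^ 2 ≤ ∫⁻ x, edist x a ^ 2 ∂ν := by
    calc μ S * edist (mMean μ S) a ^ 2 ≤ μ S * ((μ S)⁻¹ * ∫⁻ x, edist x a ∂ν) ^ 2 := by gcongr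
      _ ≤ μ S * ((μ S)⁻¹ ^ 2 * (ν univ * ∫⁻ x, edist x a ^ 2 ∂ν)) := by
        rw [mul_pow]
        gcongr
        exact sq_lintegral_le ν (by fun_prop)
      _ = (μ S * (μ S)⁻¹) * ((μ S)⁻¹ * μ S) * ∫⁻ x, edist x a ^ 2 ∂ν := by
        rw [Measure.restrict_apply_univ]; ring
      _ = _ := by
        rw [ENNReal.mul_inv_cancel hS hSt, ENNReal.inv_mul_cancel hS hSt, one_mul, one_mul]
  have hpt : ∀ x, ENNReal.ofReal (dist x (mMean μ S) ^ 2) ≤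
      2 * edist x a ^ 2 + 2 * edist (mMean μ S) a ^ 2 := by
    intro x
    rw [ENNReal.ofReal_pow dist_nonneg, ← edist_dist]
    calc edist x (mMean μ S) ^ 2 ≤ (edist x a + edist (mMean μ S) a) ^ 2 := by
          gcongr; exact edist_triangle_right _ _ _
      _ ≤ 2 * (edist x a ^ 2 + edist (mMean μ S) a ^ 2) := by
          have := ENNReal.rpow_add_le_mul_rpow_add_rpow (edist x a) (edist (mMean μ S) a)
            (p := 2) (by norm_num)
          norm_num at this
          exact this
      _ = _ := by ring
  calc _ ≤ ∫⁻ x, (2 * edist x a ^ 2 + 2 * edist (mMean μ S) a ^ 2) ∂ν := lintegral_mono hpt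
    _ = 2 * ∫⁻ x, edist x a ^ 2 ∂ν + 2 * (μ S * edist (mMean μ S) a ^ 2) := by
      rw [lintegral_add_right _ (by fun_prop), lintegral_const_mul _ (by fun_prop), lintegral_const,
        Measure.restrict_apply_univ]
      ring
    _ ≤ 2 * ∫⁻ x, edist x a ^ 2 ∂ν + 2 * ∫⁻ x, edist x a ^ 2 ∂ν := by gcongr
    _ = _ := by ring

/-! ### Energy and the testing inequality -/

lemma scl_pos (c : Plane) {h : ℝ} (hh : 0 < h) (y : Plane) : scl c h y ≠ 0 := by
  have : 0 < 2 * h + dist y c := by positivity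
  simp [scl, this]

lemma scl_ne_top (c : Plane) (h : ℝ) (y : Plane) : scl c h y ≠ ⊤ := ENNReal.ofReal_ne_top

lemma scl_mul (c : Plane) {h : ℝ} (hh : 0 < h) (y : Plane) (d : ℝ) :
    scl c h y * scl c h y ^ (-(d + 1)) = scl c h y ^ (-d) := by
  conv_lhs => enter [1]; rw [← ENNReal.rpow_one (scl c h y)]
  rw [← ENNReal.rpow_add _ _ (scl_pos c hh y) (scl_ne_top c h y)]
  congr 1; ring

lemma four_two_rpow {d : ℝ} (hd2 : d ≤ 2) : 1 ≤ (4 : ℝ≥0∞) * 2 ^ (-d) := by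
  calc (1 : ℝ≥0∞) = 4 * 2 ^ (-2 : ℝ) := by
        rw [ENNReal.rpow_neg, ENNReal.rpow_ofNat]
        norm_num
        rw [ENNReal.mul_inv_cancel] <;> norm_num
    _ ≤ _ := by
        gcongr
        norm_num

/-- Doubling a distance costs at most a factor `2^d ≤ 4` in the kernel. -/
lemma le_four_ker {d : ℝ} (hd0 : 0 ≤ d) (hd2 : d ≤ 2) {x x' : Plane} {a : ℝ≥0∞} (ha : a ≠ ⊤)
    (h : edist x x' ≤ 2 * a) : a ^ (-d) ≤ 4 * ker d x x' := by
  calc a ^ (-d) ≤ (4 * 2 ^ (-d)) * a ^ (-d) := le_mul_of_one_le_left' (four_two_rpow hd2)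
    _ = 4 * (2 * a) ^ (-d) := by
      rw [ENNReal.mul_rpow_of_ne_top (by norm_num) ha, mul_assoc]
    _ ≤ _ := by
      gcongr
      exact rpow_neg_anti hd0 h

/-- The testing inequality for the fractional integral controls the energy constant. On each
subcube `Q_r` the variance is at most `4 |Q_r| ω(Q_r)` (with `|Q_r|` the squared side length), and
`P^α(Q_r, 1_Q σ)` is dominated by the fractional integral of `1_Q σ` at every point of `Q_r`; the
sum over `r` is then the integral over `⋃ Q_r = Q`. -/
lemma energyConst_le_of_testing {α : ℝ} (hα2 : α ≤ 2) (σ ω : Measure Plane) [IsFiniteMeasure ω]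
    (C : ℝ≥0∞) (H : ∀ c h, 0 < h →
      ∫⁻ y, (∫⁻ x in cube c h, ker (2 - α) x y ∂σ) ^ 2 ∂ω ≤ C * σ (cube c h)) :
    energyConst α σ ω ≤ 4 * C := by
  refine iSup_le fun c => iSup_le fun h => iSup_le fun hh => iSup_le fun cr => iSup_le fun hr =>
    iSup_le fun _ => iSup_le fun _ => iSup_le fun hdisj => iSup_le fun _ => ?_
  set Q := cube c h
  set F : Plane → ℝ≥0∞ := fun y => (∫⁻ x in Q, ker (2 - α) x y ∂σ) ^ 2
  have key : ∀ r, (stdPoisson α (cr r) (hr r) (σ.restrict Q) / ENNReal.ofReal (2 * hr r)) ^ 2 *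
          ∫⁻ x in cube (cr r) (hr r),
            ENNReal.ofReal (dist x (mMean ω (cube (cr r) (hr r))) ^ 2) ∂ω ≤
          4 * ∫⁻ y in cube (cr r) (hr r), F y ∂ω := by
    intro r
    rcases le_or_gt (hr r) 0 with h0 | h0
    · simp [cube_eq_empty h0]
    rw [stdPoisson_div _ h0]
    set I := ∫⁻ x, scl (cr r) (hr r) x ^ (-(2 - α + 1)) ∂(σ.restrict Q)
    set ℓ := ENNReal.ofReal (2 * hr r)
    calc I ^ 2 * _ ≤ I ^ 2 * (4 * ∫⁻ x in cube (cr r) (hr r), edist x (cr r) ^ 2 ∂ω) := by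
          gcongr
          exact lintegral_sub_mean_le _ _ _ _
      _ ≤ I ^ 2 * (4 * ∫⁻ x in cube (cr r) (hr r), ℓ ^ 2 ∂ω) := by
          refine mul_le_mul' le_rfl (mul_le_mul' le_rfl
            (setLIntegral_mono measurable_const fun x hx => ?_))
          gcongr
          rw [edist_dist]
          exact ENNReal.ofReal_le_ofReal (dist_center_le hx)
      _ = 4 * ∫⁻ x in cube (cr r) (hr r), (ℓ * I) ^ 2 ∂ω := by
          rw [lintegral_const, lintegral_const]; ring
      _ ≤ _ := by
          refine mul_le_mul' le_rfl (setLIntegral_mono' (measurableSet_cube _ _) fun y hy => ?_)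
          refine pow_le_pow_left' ?_ 2
          rw [← lintegral_const_mul' _ _ ENNReal.ofReal_ne_top]
          refine lintegral_mono fun x => ?_
          calc ℓ * scl (cr r) (hr r) x ^ (-(2 - α + 1)) ≤
              scl (cr r) (hr r) x * scl (cr r) (hr r) x ^ (-(2 - α + 1)) := by
                gcongr; exact side_le_scl _ _
            _ = scl (cr r) (hr r) x ^ (-(2 - α)) := scl_mul _ h0 _ _
            _ ≤ _ := scl_rpow_le_ker (by linarith) hy x
  calc _ ≤ (σ Q)⁻¹ * ∑' r, 4 * ∫⁻ y in cube (cr r) (hr r), F y ∂ω := by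
        exact mul_le_mul' le_rfl (ENNReal.tsum_le_tsum key)
    _ = (σ Q)⁻¹ * (4 * ∫⁻ y in ⋃ r, cube (cr r) (hr r), F y ∂ω) := by
        rw [ENNReal.tsum_mul_left, lintegral_iUnion (fun r => measurableSet_cube _ _) hdisj]
    _ ≤ (σ Q)⁻¹ * (4 * (C * σ Q)) := by
        gcongr
        exact (setLIntegral_le_lintegral _ _).trans (H c h hh)
    _ = 4 * C * ((σ Q)⁻¹ * σ Q) := by ring
    _ ≤ 4 * C * 1 := by gcongr; exact ENNReal.inv_mul_le_one _
    _ = _ := mul_one _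

/-! ### Purely atomic measures -/

section Atoms

variable {ι : Type*}

/-- The purely atomic measure with mass `s i` at the point `p i`. -/
def atoms (s : ι → ℝ≥0∞) (p : ι → Plane) : Measure Plane :=
  Measure.sum fun i => s i • Measure.dirac (p i)

lemma lintegral_atoms (s : ι → ℝ≥0∞) (p : ι → Plane) (f : Plane → ℝ≥0∞) :
    ∫⁻ x, f x ∂(atoms s p) = ∑' i, s i * f (p i) := by
  simp [atoms, lintegral_sum_measure, lintegral_smul_measure]

lemma setLIntegral_atoms (s : ι → ℝ≥0∞) (p : ι → Plane) (f : Plane → ℝ≥0∞) {S : Set Plane}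
    (hS : MeasurableSet S) :
    ∫⁻ x in S, f x ∂(atoms s p) = ∑' i, s i * S.indicator f (p i) := by
  rw [← lintegral_indicator hS, lintegral_atoms]

lemma atoms_apply (s : ι → ℝ≥0∞) (p : ι → Plane) {S : Set Plane} (hS : MeasurableSet S) :
    atoms s p S = ∑' i, s i * S.indicator 1 (p i) := by
  rw [← setLIntegral_one, setLIntegral_atoms _ _ _ hS]; rfl

variable {s τ : ι → ℝ≥0∞} {p : ι → Plane} {ω : Measure Plane} {d α : ℝ}

/-- Energy bound with the atomic measure in the role of the second measure. In each subcube the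
heaviest atom `p i₀` serves as base point of the variance, so its own contribution vanishes and
every other atom is controlled by its interaction with `p i₀`, hypothesis `H2`. -/
lemma energyConst_atoms_le [IsProbabilityMeasure ω] [IsFiniteMeasure (atoms s p)]
    (hα0 : 0 ≤ α) (hα2 : α ≤ 2)
    (hmax : ∀ A : Set ι, A.Nonempty → ∃ i ∈ A, ∀ j ∈ A, s j ≤ s i)
    (H2 : ∀ i j, i ≠ j → s i ≤ s j → s i * ker (2 - α) (p i) (p j) ^ 2 ≤ (τ i * τ j) ^ 2) :
    energyConst α ω (atoms s p) ≤ 256 * (∑' i, τ i) ^ 2 * ∑' i, τ i ^ 2 := by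
  refine iSup_le fun c => iSup_le fun h => iSup_le fun hh => iSup_le fun cr => iSup_le fun hr =>
    iSup_le fun _ => iSup_le fun _ => iSup_le fun hdisj => iSup_le fun _ => ?_
  set Q := cube c h
  set σ := atoms s p with hσ
  set T := ∑' i, τ i
  set ν := atoms (fun i => τ i ^ 2) p with hν
  have key : ∀ r, (stdPoisson α (cr r) (hr r) (ω.restrict Q) / ENNReal.ofReal (2 * hr r)) ^ 2 *
          ∫⁻ x in cube (cr r) (hr r),
            ENNReal.ofReal (dist x (mMean σ (cube (cr r) (hr r))) ^ 2) ∂σ ≤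
          (256 * T ^ 2 * ω Q) * ν (cube (cr r) (hr r)) := by
    intro r
    rcases le_or_gt (hr r) 0 with h0 | h0
    · simp [cube_eq_empty h0]
    rw [stdPoisson_div _ h0]
    set I := ∫⁻ x, scl (cr r) (hr r) x ^ (-(2 - α + 1)) ∂(ω.restrict Q)
    set S := cube (cr r) (hr r)
    rcases ({i | p i ∈ S} : Set ι).eq_empty_or_nonempty with hA | hA
    · have : ∀ i, p i ∉ S := fun i hi => by
        have : i ∈ ({i | p i ∈ S} : Set ι) := hi
        simp [hA] at this
      rw [setLIntegral_atoms _ _ _ (measurableSet_cube _ _)]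
      simp [this, S]
    obtain ⟨i0, hi0, hi0max⟩ := hmax _ hA
    calc I ^ 2 * _ ≤ I ^ 2 * (4 * ∫⁻ x in S, edist x (p i0) ^ 2 ∂σ) := by
          gcongr
          exact lintegral_sub_mean_le _ _ _ _
      _ = ∑' i, 4 * (I ^ 2 * (s i * S.indicator (fun x => edist x (p i0) ^ 2) (p i))) := by
          rw [setLIntegral_atoms _ _ _ (measurableSet_cube _ _), ENNReal.tsum_mul_left,
            ENNReal.tsum_mul_left]
          ring
      _ ≤ ∑' i, (256 * T ^ 2 * ω Q) * (τ i ^ 2 * S.indicator 1 (p i)) := by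
          refine ENNReal.tsum_le_tsum fun i => ?_
          by_cases hi : p i ∈ S
          swap
          · simp [hi]
          simp only [indicator_of_mem hi, Pi.one_apply, mul_one]
          by_cases hii : i = i0
          · simp [hii]
          have hIe : I * edist (p i) (p i0) ≤ 8 * ker (2 - α) (p i) (p i0) * ω Q := by
            rw [← lintegral_mul_const' _ _ (edist_ne_top _ _)]
            calc _ ≤ ∫⁻ x in Q, 8 * ker (2 - α) (p i) (p i0) ∂ω := by
                  refine lintegral_mono fun x => ?_
                  have e1 : edist (p i) (p i0) ≤ 2 * scl (cr r) (hr r) x :=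
                    (edist_le_two_side hi hi0).trans (by gcongr; exact side_le_scl _ _)
                  calc scl (cr r) (hr r) x ^ (-(2 - α + 1)) * edist (p i) (p i0)
                      ≤ scl (cr r) (hr r) x ^ (-(2 - α + 1)) * (2 * scl (cr r) (hr r) x) := by
                        gcongr
                    _ = 2 * scl (cr r) (hr r) x ^ (-(2 - α)) := by
                        rw [← scl_mul _ h0 x (2 - α)]; ring
                    _ ≤ 2 * (4 * ker (2 - α) (p i) (p i0)) := by
                        gcongr
                        exact le_four_ker (by linarith) (by linarith) (scl_ne_top _ _ _) e1
                    _ = _ := by ring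
              _ = _ := by simp
          calc 4 * (I ^ 2 * (s i * edist (p i) (p i0) ^ 2))
              = 4 * s i * (I * edist (p i) (p i0)) ^ 2 := by ring
            _ ≤ 4 * s i * (8 * ker (2 - α) (p i) (p i0) * ω Q) ^ 2 := by gcongr
            _ = 256 * (s i * ker (2 - α) (p i) (p i0) ^ 2) * (ω Q * ω Q) := by ring
            _ ≤ 256 * (τ i * τ i0) ^ 2 * (ω Q * 1) := by
                gcongr
                · exact H2 i i0 hii (hi0max i hi)
                · exact prob_le_one
            _ = 256 * τ i0 ^ 2 * ω Q * τ i ^ 2 := by ring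
            _ ≤ _ := by gcongr; exact ENNReal.le_tsum i0
      _ = _ := by
          rw [ENNReal.tsum_mul_left, hν, atoms_apply _ _ (measurableSet_cube _ _)]
  calc _ ≤ (ω Q)⁻¹ * ∑' r, (256 * T ^ 2 * ω Q) * ν (cube (cr r) (hr r)) := by
        exact mul_le_mul' le_rfl (ENNReal.tsum_le_tsum key)
    _ = (256 * T ^ 2 * ((ω Q)⁻¹ * ω Q)) * ν (⋃ r, cube (cr r) (hr r)) := by
        rw [ENNReal.tsum_mul_left, measure_iUnion hdisj (fun r => measurableSet_cube _ _)]
        ring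
    _ ≤ (256 * T ^ 2 * 1) * ν univ := by
        gcongr
        · exact ENNReal.inv_mul_le_one _
        · exact subset_univ _
    _ = _ := by rw [hν, atoms_apply _ _ MeasurableSet.univ]; simp

/-- Muckenhoupt bound with the atomic measure in the role of the second measure. The heaviest
atom of a cube is controlled by `H1`, all other atoms by their interaction `H2` with it. -/
lemma muckA2_atoms_le [IsProbabilityMeasure ω] (hα0 : 0 ≤ α) (hα2 : α ≤ 2)
    (hmax : ∀ A : Set ι, A.Nonempty → ∃ i ∈ A, ∀ j ∈ A, s j ≤ s i) (C : ℝ≥0∞)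
    (H1 : ∀ i, s i * ∫⁻ y, ker (2 - α) (p i) y ^ 2 ∂ω ≤ C)
    (H2 : ∀ i j, i ≠ j → s i ≤ s j → s i * ker (2 - α) (p i) (p j) ^ 2 ≤ (τ i * τ j) ^ 2) :
    muckA2 α ω (atoms s p) ≤ C + 16 * (∑' i, τ i) ^ 2 * ∑' i, τ i ^ 2 := by
  classical
  refine iSup_le fun c => iSup_le fun h => iSup_le fun hh => ?_
  rw [reprPoisson_div _ hh]
  set Q := cube c h
  set T := ∑' i, τ i
  set X := ∫⁻ x in Qᶜ, (scl c h x ^ (-(2 - α))) ^ 2 ∂ω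
  rw [atoms_apply _ _ (measurableSet_cube _ _)]
  rcases ({i | p i ∈ Q} : Set ι).eq_empty_or_nonempty with hA | hA
  · have : ∀ i, p i ∉ Q := fun i hi => by
      have : i ∈ ({i | p i ∈ Q} : Set ι) := hi
      simp [hA] at this
    simp [this, Q]
  obtain ⟨i0, hi0, hi0max⟩ := hmax _ hA
  rw [← ENNReal.tsum_mul_right]
  calc _ ≤ ∑' i, ((if i = i0 then C else 0) + 16 * T ^ 2 * τ i ^ 2) := by
        refine ENNReal.tsum_le_tsum fun i => ?_
        by_cases hi : p i ∈ Q
        swap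
        · simp [hi, Q]
        simp only [Q, indicator_of_mem hi, Pi.one_apply, mul_one]
        by_cases hii : i = i0
        · refine le_trans (le_trans ?_ (H1 i)) (by simp [hii])
          gcongr
          refine (setLIntegral_le_lintegral _ _).trans (lintegral_mono fun x => ?_)
          rw [ker_comm]
          exact pow_le_pow_left' (scl_rpow_le_ker (by linarith) hi x) 2
        · refine le_trans ?_ le_add_self
          calc s i * X ≤ s i * ∫⁻ x, (4 * ker (2 - α) (p i) (p i0)) ^ 2 ∂ω := by
                gcongr
                refine (setLIntegral_le_lintegral _ _).trans (lintegral_mono fun x => ?_)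
                refine pow_le_pow_left' (le_four_ker (by linarith) (by linarith)
                  (scl_ne_top _ _ _) ?_) 2
                exact (edist_le_two_side hi hi0).trans (by gcongr; exact side_le_scl _ _)
            _ = 16 * (s i * ker (2 - α) (p i) (p i0) ^ 2) := by
                simp only [lintegral_const, measure_univ, mul_one]; ring
            _ ≤ 16 * (τ i * τ i0) ^ 2 := by
                gcongr
                exact H2 i i0 hii (hi0max i hi)
            _ = 16 * τ i0 ^ 2 * τ i ^ 2 := by ring
            _ ≤ _ := by gcongr; exact ENNReal.le_tsum i0
    _ = _ := by
        rw [ENNReal.tsum_add, tsum_ite_eq, ENNReal.tsum_mul_left]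

/-- Young's inequality with weight `θ`, up to the constant. -/
lemma mul_le_weighted {a b θ : ℝ≥0∞} (h0 : θ ≠ 0) (ht : θ ≠ ⊤) :
    a * b ≤ θ⁻¹ * a ^ 2 + θ * b ^ 2 := by
  rcases le_total a (θ * b) with h | h
  · refine le_trans ?_ le_add_self
    calc a * b ≤ θ * b * b := by gcongr
      _ = _ := by ring
  · refine le_trans ?_ le_self_add
    have : b ≤ θ⁻¹ * a := by
      calc b = θ⁻¹ * θ * b := by rw [ENNReal.inv_mul_cancel h0 ht, one_mul]
        _ = θ⁻¹ * (θ * b) := by ring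
        _ ≤ _ := by gcongr
    calc a * b ≤ a * (θ⁻¹ * a) := by gcongr
      _ = _ := by ring

/-- The farther of `x`, `x'` from `y` is at distance at least `|x - x'| / 2` from `y`. -/
lemma ker_mul_ker_le (hd0 : 0 ≤ d) (hd2 : d ≤ 2) (x x' y : Plane) :
    ker d x y * ker d x' y ≤ 4 * ker d x x' * (ker d x y + ker d x' y) := by
  have htri := edist_triangle_right x x' y
  rcases le_total (edist x y) (edist x' y) with h | h
  · have : ker d x' y ≤ 4 * ker d x x' :=
      le_four_ker hd0 hd2 (edist_ne_top _ _) (htri.trans (by rw [two_mul]; gcongr))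
    calc ker d x y * ker d x' y ≤ ker d x y * (4 * ker d x x') := by gcongr
      _ = 4 * ker d x x' * ker d x y := by ring
      _ ≤ _ := by gcongr; exact le_self_add
  · have : ker d x y ≤ 4 * ker d x x' :=
      le_four_ker hd0 hd2 (edist_ne_top _ _) (htri.trans (by rw [two_mul]; gcongr))
    calc ker d x y * ker d x' y ≤ 4 * ker d x x' * ker d x' y := by gcongr
      _ ≤ _ := by gcongr; exact le_add_self

/-- Off-diagonal terms of the testing inequality: interactions of distinct atoms through `ω` are
summable with the weights `τ`. -/
lemma cross_le [IsProbabilityMeasure ω] (hd0 : 0 ≤ d) (hd2 : d ≤ 2) (C : ℝ≥0∞)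
    (H1 : ∀ i, s i * ∫⁻ y, ker d (p i) y ^ 2 ∂ω ≤ C)
    (H2 : ∀ i j, i ≠ j → s i ≤ s j → s i * ker d (p i) (p j) ^ 2 ≤ (τ i * τ j) ^ 2)
    (hτ : ∀ i, τ i ≠ 0) (hτ' : ∀ i, τ i ≠ ⊤) {i j : ι} (hij : i ≠ j) (hs : s j ≤ s i) :
    s i * s j * ∫⁻ y, ker d (p i) y * ker d (p j) y ∂ω ≤
      (8 + 4 * C) * (τ i * τ j) * (s i + s j) := by
  set θ := τ i * τ j
  have hθ : θ ≠ 0 := mul_ne_zero (hτ i) (hτ j)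
  have hθ' : θ ≠ ⊤ := ENNReal.mul_ne_top (hτ' i) (hτ' j)
  set k := ker d (p i) (p j)
  have mi := measurable_ker d (p i)
  have mj := measurable_ker d (p j)
  have hk : s j * k ^ 2 ≤ θ ^ 2 := by
    have := H2 j i hij.symm hs
    rwa [ker_comm, mul_comm (τ j)] at this
  calc _ ≤ s i * s j * ∫⁻ y, (8 * (θ⁻¹ * k ^ 2) + 4 * θ * ker d (p i) y ^ 2
        + 4 * θ * ker d (p j) y ^ 2) ∂ω := by
        gcongr with y
        refine (ker_mul_ker_le hd0 hd2 _ _ _).trans ?_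
        calc 4 * k * (ker d (p i) y + ker d (p j) y)
            = 4 * (k * ker d (p i) y + k * ker d (p j) y) := by ring
          _ ≤ 4 * ((θ⁻¹ * k ^ 2 + θ * ker d (p i) y ^ 2) +
              (θ⁻¹ * k ^ 2 + θ * ker d (p j) y ^ 2)) := by
              gcongr <;> exact mul_le_weighted hθ hθ'
          _ = _ := by ring
    _ = 8 * θ⁻¹ * s i * (s j * k ^ 2) + 4 * θ * s j * (s i * ∫⁻ y, ker d (p i) y ^ 2 ∂ω)
        + 4 * θ * s i * (s j * ∫⁻ y, ker d (p j) y ^ 2 ∂ω) := by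
        rw [lintegral_add_right _ (by fun_prop), lintegral_add_right _ (by fun_prop),
          lintegral_const_mul (4 * θ) (mi.pow_const 2),
          lintegral_const_mul (4 * θ) (mj.pow_const 2)]
        simp only [lintegral_const, measure_univ, mul_one]
        ring
    _ ≤ 8 * θ⁻¹ * s i * θ ^ 2 + 4 * θ * s j * C + 4 * θ * s i * C := by
        gcongr
        · exact H1 i
        · exact H1 j
    _ = 8 * (θ⁻¹ * θ) * θ * s i + 4 * θ * s j * C + 4 * θ * s i * C := by ring
    _ = 8 * θ * s i + 4 * θ * s j * C + 4 * θ * s i * C := by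
        rw [ENNReal.inv_mul_cancel hθ hθ', mul_one]
    _ ≤ 8 * θ * s i + 4 * θ * s j * C + 4 * θ * s i * C + 8 * θ * s j := le_self_add
    _ = _ := by ring

/-- The testing inequality for the fractional integral of an atomic measure: expanding the
square, the diagonal is handled by `H1` and the off-diagonal by `cross_le`. -/
lemma testing_atoms [Countable ι] [IsProbabilityMeasure ω] (hd0 : 0 ≤ d) (hd2 : d ≤ 2) (C : ℝ≥0∞)
    (H1 : ∀ i, s i * ∫⁻ y, ker d (p i) y ^ 2 ∂ω ≤ C)
    (H2 : ∀ i j, i ≠ j → s i ≤ s j → s i * ker d (p i) (p j) ^ 2 ≤ (τ i * τ j) ^ 2)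
    (hτ : ∀ i, τ i ≠ 0) (hτ' : ∀ i, τ i ≠ ⊤) (c : Plane) (h : ℝ) :
    ∫⁻ y, (∫⁻ x in cube c h, ker d x y ∂(atoms s p)) ^ 2 ∂ω ≤
      (2 * (8 + 4 * C) * (∑' i, τ i) ^ 2 + C) * atoms s p (cube c h) := by
  classical
  set Q := cube c h
  set T := ∑' i, τ i
  have hQ : MeasurableSet Q := measurableSet_cube c h
  set t : ι → ℝ≥0∞ := fun i => s i * Q.indicator 1 (p i)
  have mk := measurable_ker d
  have inner : ∀ y, ∫⁻ x in Q, ker d x y ∂(atoms s p) = ∑' i, t i * ker d (p i) y := by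
    intro y
    rw [setLIntegral_atoms _ _ _ hQ]
    refine tsum_congr fun i => ?_
    by_cases hi : p i ∈ Q <;> simp [t, hi]
  have pair : ∀ i j, t i * t j * ∫⁻ y, ker d (p i) y * ker d (p j) y ∂ω ≤
      (8 + 4 * C) * (τ i * τ j) * (t i + t j) + if j = i then C * t i else 0 := by
    intro i j
    by_cases hi : p i ∈ Q
    swap
    · simp [t, hi]
    by_cases hj : p j ∈ Q
    swap
    · simp [t, hj]
    simp only [t, hi, hj, indicator_of_mem, Pi.one_apply, mul_one]
    by_cases hij : i = j
    · subst hij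
      refine le_trans ?_ le_add_self
      simp only [if_true]
      calc _ = (s i * ∫⁻ y, ker d (p i) y ^ 2 ∂ω) * s i := by
            simp only [sq]; ring
        _ ≤ _ := by gcongr; exact H1 i
    · refine le_trans ?_ le_self_add
      rcases le_total (s j) (s i) with hs | hs
      · exact cross_le hd0 hd2 C H1 H2 hτ hτ' hij hs
      · have := cross_le hd0 hd2 C H1 H2 hτ hτ' (Ne.symm hij) hs
        rw [mul_comm (s i), mul_comm (τ i), add_comm (s i)]
        simpa only [mul_comm] using this
  calc _ = ∫⁻ y, ∑' i, ∑' j, t i * t j * (ker d (p i) y * ker d (p j) y) ∂ω := by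
        refine lintegral_congr fun y => ?_
        rw [inner, sq, ← ENNReal.tsum_mul_right]
        refine tsum_congr fun i => ?_
        rw [← ENNReal.tsum_mul_left]
        refine tsum_congr fun j => ?_
        ring
    _ = ∑' i, ∑' j, t i * t j * ∫⁻ y, ker d (p i) y * ker d (p j) y ∂ω := by
        have m2 : ∀ i j, Measurable fun y => t i * t j * (ker d (p i) y * ker d (p j) y) :=
          fun i j => ((mk _).mul (mk _)).const_mul _
        rw [lintegral_tsum fun i => (Measurable.tsum fun j => m2 i j).aemeasurable]
        refine tsum_congr fun i => ?_
        rw [lintegral_tsum fun j => (m2 i j).aemeasurable]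
        refine tsum_congr fun j => ?_
        exact lintegral_const_mul _ ((mk _).mul (mk _))
    _ ≤ ∑' i, ∑' j, ((8 + 4 * C) * (τ i * τ j) * (t i + t j) + if j = i then C * t i else 0) :=
        ENNReal.tsum_le_tsum fun i => ENNReal.tsum_le_tsum fun j => pair i j
    _ = ∑' i, (((8 + 4 * C) * (τ i * t i) * T + (8 + 4 * C) * τ i * ∑' j, τ j * t j) + C * t i) := by
        refine tsum_congr fun i => ?_
        rw [ENNReal.tsum_add, tsum_ite_eq]
        congr 1
        rw [← ENNReal.tsum_mul_left, ← ENNReal.tsum_mul_left, ← ENNReal.tsum_add]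
        refine tsum_congr fun j => ?_
        ring
    _ = 2 * (8 + 4 * C) * T * (∑' j, τ j * t j) + C * ∑' i, t i := by
        rw [ENNReal.tsum_add, ENNReal.tsum_add, ENNReal.tsum_mul_right, ENNReal.tsum_mul_right,
          ENNReal.tsum_mul_left, ENNReal.tsum_mul_left, ENNReal.tsum_mul_left]
        ring
    _ ≤ 2 * (8 + 4 * C) * T * (∑' j, T * t j) + C * ∑' i, t i := by
        gcongr with j
        exact ENNReal.le_tsum j
    _ = _ := by
        rw [ENNReal.tsum_mul_left, atoms_apply _ _ hQ]
        ring

end Atoms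

/-! ### The construction -/

section Construction

/-- The scale `2^{-M j²}` of the `j`-th generation; for `M > 0` it decays faster than any
geometric sequence. -/
def gap (M j : ℕ) : ℝ := (1 / 2) ^ (M * j ^ 2)

/-- The `d`-th power of the scale `gap M j`. -/
def gapPow (d : ℝ) (M j : ℕ) : ℝ≥0∞ := ENNReal.ofReal (gap M j) ^ d

/-- The contribution of the `k`-th coordinate of `b` to the Cantor parametrization. -/
def digit (M : ℕ) (b : ℕ → Bool) (k : ℕ) : ℝ := if b k then gap M k else 0

/-- The parametrization `b ↦ ∑ b_k · gap M k` of a Cantor set in `[0, 2]`. -/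
def cantor (M : ℕ) (b : ℕ → Bool) : ℝ := ∑' k, digit M b k

/-- The Cantor set placed on the vertical axis. -/
def cantorPt (M : ℕ) (b : ℕ → Bool) : Plane := !₂[0, cantor M b]

/-- Extension of a finite word by `false`. -/
def pad {j : ℕ} (v : Fin j → Bool) (k : ℕ) : Bool := if h : k < j then v ⟨k, h⟩ else false

/-- The atom attached to the word `v` of length `j`: it lies at distance `gap M j` to the left
of a point of the part of the Cantor set coded by the words starting with `v`. -/
def atomPt (M : ℕ) (i : Σ j : ℕ, Fin j → Bool) : Plane := !₂[-gap M i.1, cantor M (pad i.2)]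

/-- The mass of an atom of generation `j`, namely `2^j · (gap M j)^{2d}`. -/
def mass (d : ℝ) (M j : ℕ) : ℝ≥0∞ := 2 ^ j * gapPow d M j ^ 2

/-- The fair coin-tossing measure. -/
def coin : Measure (ℕ → Bool) :=
  Measure.infinitePi fun _ => (2⁻¹ : ℝ≥0∞) • (Measure.dirac true + Measure.dirac false)

instance : IsProbabilityMeasure
    ((2⁻¹ : ℝ≥0∞) • (Measure.dirac true + Measure.dirac false) : Measure Bool) := by
  constructor
  simp only [Measure.smul_apply, Measure.add_apply, measure_univ, smul_eq_mul]
  rw [one_add_one_eq_two]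
  exact ENNReal.inv_mul_cancel (by norm_num) (by norm_num)

instance : IsProbabilityMeasure coin := by unfold coin; infer_instance

/-- The uniform measure on the Cantor set; this is `ω`. -/
def cantorMeasure (M : ℕ) : Measure Plane := coin.map (cantorPt M)

/-- The cylinder of sequences that agree with `b` in the first `j` places. -/
def cyl (j : ℕ) (b : ℕ → Bool) : Set (ℕ → Bool) := {b' | ∀ k < j, b' k = b k}

lemma cyl_eq (j : ℕ) (b : ℕ → Bool) :
    cyl j b = Set.pi (Finset.range j : Finset ℕ) fun k => {b k} := by
  ext; simp [cyl, Set.mem_pi]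

lemma measurableSet_cyl (j : ℕ) (b : ℕ → Bool) : MeasurableSet (cyl j b) := by
  rw [cyl_eq]
  exact MeasurableSet.pi (Finset.range j).countable_toSet fun _ _ => measurableSet_singleton _

lemma coin_cyl (j : ℕ) (b : ℕ → Bool) : coin (cyl j b) = 2⁻¹ ^ j := by
  rw [cyl_eq, coin, Measure.infinitePi_pi _ fun _ _ => measurableSet_singleton _]
  have : ∀ a : Bool, ((2⁻¹ : ℝ≥0∞) • (Measure.dirac true + Measure.dirac false)) {a} = 2⁻¹ := by
    intro a
    cases a <;> simp
  simp only [this, Finset.prod_const, Finset.card_range]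

lemma gap_pos (M j : ℕ) : 0 < gap M j := by unfold gap; positivity

lemma gap_zero (M : ℕ) : gap M 0 = 1 := by simp [gap]

lemma gap_add_le {M : ℕ} (hM : 2 ≤ M) (j k : ℕ) : gap M (k + j) ≤ gap M j * (1 / 2) ^ k := by
  unfold gap
  rw [← pow_add]
  refine pow_le_pow_of_le_one (by norm_num) (by norm_num) ?_
  have : k ≤ k ^ 2 := Nat.le_self_pow (by norm_num) k
  nlinarith [Nat.zero_le (M * (2 * k * j))]

lemma gap_lt_le {M : ℕ} (hM : 2 ≤ M) {i j : ℕ} (hij : i < j) : gap M j ≤ gap M i / 4 := by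
  have : gap M i / 4 = (1 / 2) ^ (M * i ^ 2 + 2) := by rw [gap, pow_add]; norm_num; ring
  rw [this, gap]
  refine pow_le_pow_of_le_one (by norm_num) (by norm_num) ?_
  have : i ^ 2 + 1 ≤ j ^ 2 := by nlinarith
  nlinarith

lemma gapPow_ne_zero (d : ℝ) (M j : ℕ) : gapPow d M j ≠ 0 := by
  unfold gapPow
  rw [ENNReal.ofReal_rpow_of_pos (gap_pos _ _)]
  simpa using Real.rpow_pos_of_pos (gap_pos M j) d

lemma gapPow_ne_top (d : ℝ) (M j : ℕ) : gapPow d M j ≠ ⊤ := by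
  unfold gapPow
  rw [ENNReal.ofReal_rpow_of_pos (gap_pos _ _)]
  exact ENNReal.ofReal_ne_top

lemma gapPow_zero (d : ℝ) (M : ℕ) : gapPow d M 0 = 1 := by
  simp [gapPow, gap_zero]

/-- The gain over previous generations; this is where `M d ≥ 6` is used. -/
lemma gapPow_lt_le {d : ℝ} {M : ℕ} (hMd : 6 ≤ M * d) {i j : ℕ} (hij : i < j) :
    gapPow d M j ≤ 64⁻¹ ^ j * gapPow d M i := by
  have key : gap M j ^ d ≤ (1 / 64) ^ j * gap M i ^ d := by
    have e : ∀ n, gap M n ^ d = (1 / 2 : ℝ) ^ (M * d * n ^ 2) := by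
      intro n
      rw [gap, ← Real.rpow_natCast, ← Real.rpow_mul (by norm_num)]
      push_cast; ring_nf
    have e2 : (1 / 64 : ℝ) ^ j = (1 / 2 : ℝ) ^ (6 * (j : ℝ)) := by
      rw [Real.rpow_mul (by norm_num), Real.rpow_natCast]; norm_num
    rw [e, e, e2, ← Real.rpow_add (by norm_num)]
    refine Real.rpow_le_rpow_of_exponent_ge (by norm_num) (by norm_num) ?_
    have h1 : (i : ℝ) + 1 ≤ j := by exact_mod_cast hij
    have h2 : (j : ℝ) ≤ j ^ 2 - i ^ 2 := by nlinarith [(Nat.cast_nonneg i : (0 : ℝ) ≤ i)]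
    have : 6 * (j : ℝ) ≤ M * d * (j ^ 2 - i ^ 2) :=
      mul_le_mul hMd h2 (by positivity) (by linarith)
    linarith
  unfold gapPow
  rw [ENNReal.ofReal_rpow_of_pos (gap_pos _ _), ENNReal.ofReal_rpow_of_pos (gap_pos _ _)]
  refine (ENNReal.ofReal_le_ofReal key).trans_eq ?_
  rw [ENNReal.ofReal_mul (by positivity), ENNReal.ofReal_pow (by norm_num), one_div,
    ENNReal.ofReal_inv_of_pos (by norm_num), ENNReal.ofReal_ofNat]

lemma gapPow_le {d : ℝ} {M : ℕ} (hMd : 6 ≤ M * d) (j : ℕ) :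
    gapPow d M j ≤ 64⁻¹ ^ j := by
  rcases Nat.eq_zero_or_pos j with rfl | h
  · simp [gapPow_zero]
  · simpa [gapPow_zero] using gapPow_lt_le hMd h

/-! ### The Cantor set -/

lemma digit_nonneg (M : ℕ) (b : ℕ → Bool) (k : ℕ) : 0 ≤ digit M b k := by
  unfold digit; split_ifs; exacts [(gap_pos _ _).le, le_rfl]

lemma digit_le (M : ℕ) (b : ℕ → Bool) (k : ℕ) : digit M b k ≤ gap M k := by
  unfold digit; split_ifs; exacts [le_rfl, (gap_pos _ _).le]

lemma digit_bound {M : ℕ} (hM : 2 ≤ M) (b : ℕ → Bool) (k : ℕ) :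
    ‖digit M b k‖ ≤ (1 / 2) ^ k := by
  rw [Real.norm_of_nonneg (digit_nonneg _ _ _)]
  have := gap_add_le hM 0 k
  rw [gap_zero, one_mul] at this
  exact (digit_le _ _ _).trans this

lemma summable_digit {M : ℕ} (hM : 2 ≤ M) (b : ℕ → Bool) : Summable (digit M b) :=
  Summable.of_norm_bounded summable_geometric_two (digit_bound hM b)

lemma continuous_cantor {M : ℕ} (hM : 2 ≤ M) : Continuous (cantor M) := by
  refine continuous_tsum (u := fun k => (1 / 2 : ℝ) ^ k) (fun k => ?_) summable_geometric_two
    fun k b => digit_bound hM b k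
  have : (fun b => digit M b k) = (fun t : Bool => if t then gap M k else 0) ∘ fun b => b k := rfl
  rw [this]
  exact continuous_of_discreteTopology.comp (continuous_apply k)

lemma measurable_cantorPt {M : ℕ} (hM : 2 ≤ M) : Measurable (cantorPt M) := by
  have : Measurable (cantor M) := (continuous_cantor hM).measurable
  refine (WithLp.measurable_toLp 2 (Fin 2 → ℝ)).comp ?_
  refine measurable_pi_lambda _ fun i => ?_
  fin_cases i
  · exact measurable_const
  · exact this

lemma abs_cantor_sub_le {M : ℕ} (hM : 2 ≤ M) {j : ℕ} {b b' : ℕ → Bool}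
    (h : ∀ k < j, b k = b' k) : |cantor M b - cantor M b'| ≤ 2 * gap M j := by
  have hs := (summable_digit hM b).sub (summable_digit hM b')
  rw [cantor, cantor, ← (summable_digit hM b).tsum_sub (summable_digit hM b'),
    ← hs.sum_add_tsum_nat_add j, Finset.sum_eq_zero, zero_add]
  · rw [← Real.norm_eq_abs, mul_comm]
    refine tsum_of_norm_bounded (hasSum_geometric_two.mul_left (gap M j)) fun k => ?_
    rw [Real.norm_eq_abs]
    refine (abs_sub_le_of_nonneg_of_le (digit_nonneg _ _ _) (digit_le _ _ _)
      (digit_nonneg _ _ _) (digit_le _ _ _)).trans (gap_add_le hM j k)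
  · intro k hk
    simp [digit, h k (Finset.mem_range.1 hk)]

/-- Sequences that differ before place `j` give points separated by half the gap of the first
place `l` where they differ. -/
lemma le_abs_cantor_sub {M : ℕ} (hM : 2 ≤ M) {j : ℕ} {b b' : ℕ → Bool}
    (h : ¬ ∀ k < j, b k = b' k) :
    ∃ l < j, gap M l / 2 ≤ |cantor M b - cantor M b'| := by
  classical
  push Not at h
  let l := Nat.find h
  obtain ⟨hlj, hl⟩ : l < j ∧ b l ≠ b' l := Nat.find_spec h
  have hmin : ∀ k < l, b k = b' k := by
    intro k hk
    by_contra hne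
    exact Nat.find_min h hk ⟨hk.trans hlj, hne⟩
  refine ⟨l, hlj, ?_⟩
  -- `b''` agrees with `b` through place `l`, and with `b'` except at place `l`
  set b'' := Function.update b' l (b l)
  have h1 : |cantor M b - cantor M b''| ≤ 2 * gap M (l + 1) := by
    refine abs_cantor_sub_le hM fun k hk => ?_
    rcases Nat.lt_succ_iff_lt_or_eq.1 hk with hk | hk
    · simp [b'', hk.ne, hmin k hk]
    · simp [b'', hk]
  have h2 : |cantor M b'' - cantor M b'| = gap M l := by
    rw [cantor, cantor, ← (summable_digit hM b'').tsum_sub (summable_digit hM b'),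
      tsum_eq_single l]
    · have : b'' l = b l := by simp [b'']
      simp only [digit, this]
      cases hb : b l <;> cases hb' : b' l <;> simp_all [abs_of_pos, gap_pos]
    · intro k hk
      simp [digit, b'', hk]
  have h3 := gap_lt_le hM (Nat.lt_succ_self l)
  have h4 := abs_sub_le (cantor M b'') (cantor M b) (cantor M b')
  rw [abs_sub_comm (cantor M b'') (cantor M b)] at h4
  rw [Nat.succ_eq_add_one] at h3
  linarith

lemma cantor_nonneg (M : ℕ) (b : ℕ → Bool) : 0 ≤ cantor M b := tsum_nonneg (digit_nonneg M b)

lemma cantor_le {M : ℕ} (hM : 2 ≤ M) (b : ℕ → Bool) : cantor M b ≤ 2 := by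
  have := abs_cantor_sub_le hM (j := 0) (b := b) (b' := fun _ => false) (by simp)
  have e : cantor M (fun _ => false) = 0 := by simp [cantor, digit]
  rw [e, sub_zero, gap_zero] at this
  linarith [le_abs_self (cantor M b)]

/-! ### Distances -/

lemma gap_le_dist_atom_cantor (M : ℕ) (i : Σ j : ℕ, Fin j → Bool) (b : ℕ → Bool) :
    gap M i.1 ≤ dist (atomPt M i) (cantorPt M b) := by
  have := abs_coord_le_dist (atomPt M i) (cantorPt M b) 0
  simpa [atomPt, cantorPt, abs_of_pos (gap_pos M i.1)] using this

lemma far_atom_cantor {M : ℕ} (hM : 2 ≤ M) {i : Σ j : ℕ, Fin j → Bool} {b : ℕ → Bool}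
    (hb : b ∉ cyl i.1 (pad i.2)) :
    ∃ l < i.1, gap M l / 2 ≤ dist (atomPt M i) (cantorPt M b) := by
  obtain ⟨l, hl, h⟩ := le_abs_cantor_sub hM hb
  refine ⟨l, hl, ?_⟩
  have := abs_coord_le_dist (atomPt M i) (cantorPt M b) 1
  simp only [atomPt, cantorPt] at this
  rw [abs_sub_comm] at h
  exact h.trans this

lemma near_atom_cantor {M : ℕ} (hM : 2 ≤ M) {i : Σ j : ℕ, Fin j → Bool} {b : ℕ → Bool}
    (hb : b ∈ cyl i.1 (pad i.2)) :
    dist (atomPt M i) (cantorPt M b) ≤ 2 * (2 * gap M i.1) := by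
  have hp := gap_pos M i.1
  refine plane_dist_le (by positivity) fun t => ?_
  fin_cases t
  · simp [atomPt, cantorPt, abs_of_pos hp]; linarith
  · have := abs_cantor_sub_le hM hb
    rw [abs_sub_comm] at this
    exact this

lemma far_atom_atom {M : ℕ} (hM : 2 ≤ M) {i i' : Σ j : ℕ, Fin j → Bool} (hii : i ≠ i')
    (hle : i'.1 ≤ i.1) : ∃ l < i.1, gap M l / 2 ≤ dist (atomPt M i) (atomPt M i') := by
  rcases hle.lt_or_eq with hlt | heq
  -- different generations: the atoms lie at different distances from the vertical axis
  · refine ⟨i'.1, hlt, ?_⟩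
    have := abs_coord_le_dist (atomPt M i) (atomPt M i') 0
    refine le_trans ?_ this
    have h1 := gap_lt_le hM hlt
    have h2 := gap_pos M i'.1
    refine le_trans ?_ (le_abs_self _)
    simp only [atomPt, PiLp.toLp_apply, Matrix.cons_val_zero]
    linarith
  -- same generation: the words differ, hence so do the vertical coordinates
  · obtain ⟨j, u⟩ := i
    obtain ⟨j', v⟩ := i'
    obtain rfl : j' = j := heq
    have huv : ¬ ∀ k < j', pad u k = pad v k := by
      intro H
      apply hii
      congr 1
      ext ⟨k, hk⟩
      simpa [pad, hk] using H k hk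
    obtain ⟨l, hl, h⟩ := le_abs_cantor_sub hM huv
    exact ⟨l, hl, h.trans (abs_coord_le_dist (atomPt M ⟨j', u⟩) (atomPt M ⟨j', v⟩) 1)⟩

/-! ### Kernel estimates -/

lemma ofReal_two_mul (r : ℝ) : ENNReal.ofReal (2 * r) = 2 * ENNReal.ofReal r := by
  rw [ENNReal.ofReal_mul (by norm_num), ENNReal.ofReal_ofNat]

lemma ker_le_of_gap {d : ℝ} (hd0 : 0 ≤ d) (hd2 : d ≤ 2) {M j : ℕ} {x y : Plane}
    (h : gap M j / 2 ≤ dist x y) : ker d x y ≤ 4 * (gapPow d M j)⁻¹ := by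
  have h' : ENNReal.ofReal (gap M j) ≤ 2 * edist x y := by
    rw [edist_dist, ← ofReal_two_mul]
    exact ENNReal.ofReal_le_ofReal (by linarith)
  calc ker d x y ≤ (4 * 2 ^ (-d)) * ker d x y := le_mul_of_one_le_left' (four_two_rpow hd2)
    _ = 4 * (2 * edist x y) ^ (-d) := by
      rw [ENNReal.mul_rpow_of_ne_top (by norm_num) (edist_ne_top _ _), mul_assoc, ker]
    _ ≤ 4 * ENNReal.ofReal (gap M j) ^ (-d) := by
      exact mul_le_mul' le_rfl (rpow_neg_anti hd0 h')
    _ = _ := by rw [ENNReal.rpow_neg, gapPow]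

lemma le_ker_of_gap {d : ℝ} (hd0 : 0 ≤ d) (hd2 : d ≤ 2) {M j : ℕ} {x y : Plane}
    (h : dist x y ≤ 2 * (2 * gap M j)) : (gapPow d M j)⁻¹ ≤ 16 * ker d x y := by
  have h' : edist x y ≤ 2 * (2 * ENNReal.ofReal (gap M j)) := by
    rw [edist_dist, ← ofReal_two_mul, ← ofReal_two_mul]
    exact ENNReal.ofReal_le_ofReal h
  calc (gapPow d M j)⁻¹ = ENNReal.ofReal (gap M j) ^ (-d) := by rw [ENNReal.rpow_neg, gapPow]
    _ ≤ (4 * 2 ^ (-d)) * ENNReal.ofReal (gap M j) ^ (-d) :=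
      le_mul_of_one_le_left' (four_two_rpow hd2)
    _ = 4 * (2 * ENNReal.ofReal (gap M j)) ^ (-d) := by
      rw [ENNReal.mul_rpow_of_ne_top (by norm_num) ENNReal.ofReal_ne_top, mul_assoc]
    _ ≤ 4 * (4 * ker d x y) := by
      gcongr
      exact le_four_ker hd0 hd2 (ENNReal.mul_ne_top (by norm_num) ENNReal.ofReal_ne_top) h'
    _ = _ := by ring

/-- An atom interacts with the measure in its own cluster with strength at most `16 · 2^j`,
a multiple of the inverse of the measure of the cluster. -/
lemma mass_near {d : ℝ} (hd0 : 0 ≤ d) (hd2 : d ≤ 2) {M j : ℕ} {x y : Plane}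
    (h : gap M j ≤ dist x y) : mass d M j * ker d x y ^ 2 ≤ 16 * 2 ^ j := by
  have h' : gap M j / 2 ≤ dist x y := by linarith [gap_pos M j]
  calc _ ≤ mass d M j * (4 * (gapPow d M j)⁻¹) ^ 2 := by
        gcongr; exact ker_le_of_gap hd0 hd2 h'
    _ = 16 * 2 ^ j * (gapPow d M j * (gapPow d M j)⁻¹) ^ 2 := by rw [mass]; ring
    _ = _ := by
      rw [ENNReal.mul_inv_cancel (gapPow_ne_zero _ _ _) (gapPow_ne_top _ _ _)]; simp

lemma ratio_le : (2 * 64⁻¹ ^ 2 : ℝ≥0∞) ≤ 512⁻¹ := by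
  rw [← ENNReal.inv_pow, ← div_eq_mul_inv]
  refine ENNReal.div_le_of_le_mul ?_
  rw [mul_comm, ← div_eq_mul_inv, ENNReal.le_div_iff_mul_le (by norm_num) (by norm_num)]
  norm_num

/-- An atom interacts very weakly with everything at the distance of an earlier generation. -/
lemma mass_far {d : ℝ} (hd0 : 0 ≤ d) (hd2 : d ≤ 2) {M j : ℕ} (hMd : 6 ≤ M * d) {x y : Plane}
    (h : ∃ l < j, gap M l / 2 ≤ dist x y) : mass d M j * ker d x y ^ 2 ≤ 16 * 512⁻¹ ^ j := by
  obtain ⟨l, hl, h⟩ := h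
  calc _ ≤ 2 ^ j * (64⁻¹ ^ j * gapPow d M l) ^ 2 * (4 * (gapPow d M l)⁻¹) ^ 2 := by
        rw [mass]
        gcongr
        · exact gapPow_lt_le hMd hl
        · exact ker_le_of_gap hd0 hd2 h
    _ = 16 * (2 * 64⁻¹ ^ 2) ^ j * (gapPow d M l * (gapPow d M l)⁻¹) ^ 2 := by ring
    _ = 16 * (2 * 64⁻¹ ^ 2) ^ j := by
      rw [ENNReal.mul_inv_cancel (gapPow_ne_zero _ _ _) (gapPow_ne_top _ _ _)]; simp
    _ ≤ _ := by gcongr; exact ratio_le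

lemma mass_le {d : ℝ} {M : ℕ} (hMd : 6 ≤ M * d) (j : ℕ) :
    mass d M j ≤ 512⁻¹ ^ j := by
  calc mass d M j ≤ 2 ^ j * (64⁻¹ ^ j) ^ 2 := by
        rw [mass]; gcongr; exact gapPow_le hMd j
    _ = (2 * 64⁻¹ ^ 2) ^ j := by ring
    _ ≤ _ := by gcongr; exact ratio_le

lemma mass_strictAnti {d : ℝ} {M : ℕ} (hMd : 6 ≤ M * d) : StrictAnti (mass d M) := by
  intro i j hij
  have hpos := gapPow_ne_zero d M i
  have htop := gapPow_ne_top d M i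
  calc mass d M j ≤ 2 ^ j * (64⁻¹ ^ j * gapPow d M i) ^ 2 := by
        rw [mass]; gcongr; exact gapPow_lt_le hMd hij
    _ = (2 * 64⁻¹ ^ 2) ^ j * gapPow d M i ^ 2 := by ring
    _ ≤ 512⁻¹ ^ j * gapPow d M i ^ 2 := by gcongr; exact ratio_le
    _ < 1 * gapPow d M i ^ 2 := by
      refine ENNReal.mul_lt_mul_left (pow_ne_zero 2 hpos) (ENNReal.pow_ne_top htop) ?_
      exact pow_lt_one₀ (by simp) (by simp) (by omega)
    _ ≤ 2 ^ i * gapPow d M i ^ 2 := by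
      gcongr
      exact one_le_pow₀ (by norm_num)

/-! ### The two measures -/

lemma lintegral_cantorMeasure {M : ℕ} (hM : 2 ≤ M) {f : Plane → ℝ≥0∞} (hf : Measurable f) :
    ∫⁻ y, f y ∂(cantorMeasure M) = ∫⁻ b, f (cantorPt M b) ∂coin :=
  lintegral_map hf (measurable_cantorPt hM)

lemma isProbabilityMeasure_cantorMeasure {M : ℕ} (hM : 2 ≤ M) :
    IsProbabilityMeasure (cantorMeasure M) :=
  Measure.isProbabilityMeasure_map (measurable_cantorPt hM).aemeasurable

lemma two_mul_inv_pow (j : ℕ) : (2 : ℝ≥0∞) ^ j * 2⁻¹ ^ j = 1 := by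
  rw [← mul_pow, ENNReal.mul_inv_cancel (by norm_num) (by norm_num), one_pow]

lemma inv_pow_le_one (j : ℕ) : (512⁻¹ : ℝ≥0∞) ^ j ≤ 1 :=
  pow_le_one₀ (by simp) (by simp)

/-- Hypothesis `H1` of `testing_atoms` and `muckA2_atoms_le`. -/
lemma mass_integral_le {d : ℝ} (hd0 : 0 ≤ d) (hd2 : d ≤ 2) {M : ℕ} (hM : 2 ≤ M)
    (hMd : 6 ≤ M * d) (i : Σ j : ℕ, Fin j → Bool) :
    mass d M i.1 * ∫⁻ y, ker d (atomPt M i) y ^ 2 ∂(cantorMeasure M) ≤ 32 := by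
  set K := cyl i.1 (pad i.2)
  have hK : MeasurableSet K := measurableSet_cyl _ _
  have mk := measurable_ker d (atomPt M i)
  have mk2 : Measurable fun b => ker d (atomPt M i) (cantorPt M b) ^ 2 :=
    (mk.comp (measurable_cantorPt hM)).pow_const 2
  rw [lintegral_cantorMeasure hM (mk.pow_const 2), ← lintegral_const_mul _ mk2]
  calc _ ≤ ∫⁻ b, (K.indicator (fun _ => 16 * 2 ^ i.1) b + 16) ∂coin := by
        refine lintegral_mono fun b => ?_
        by_cases hb : b ∈ K
        · refine le_trans ?_ le_self_add
          rw [indicator_of_mem hb]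
          exact mass_near hd0 hd2 (gap_le_dist_atom_cantor M i b)
        · refine le_trans ?_ le_add_self
          calc _ ≤ 16 * 512⁻¹ ^ i.1 := mass_far hd0 hd2 hMd (far_atom_cantor hM hb)
            _ ≤ 16 * 1 := by gcongr; exact inv_pow_le_one _
            _ = 16 := mul_one _
    _ = 16 * (2 ^ i.1 * 2⁻¹ ^ i.1) + 16 := by
        rw [lintegral_add_right _ measurable_const, lintegral_indicator_const hK, coin_cyl]
        simp [mul_assoc]
    _ = 32 := by rw [two_mul_inv_pow]; norm_num

/-- The weights `τ`; they are summable even though generation `j` has `2^j` atoms. -/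
def weight (j : ℕ) : ℝ≥0∞ := 2 * 4⁻¹ ^ j

/-- Hypothesis `H2` of `testing_atoms`, `energyConst_atoms_le` and `muckA2_atoms_le`. -/
lemma mass_pair_le {d : ℝ} (hd0 : 0 ≤ d) (hd2 : d ≤ 2) {M : ℕ} (hM : 2 ≤ M)
    (hMd : 6 ≤ M * d) (i i' : Σ j : ℕ, Fin j → Bool) (hii : i ≠ i')
    (hs : mass d M i.1 ≤ mass d M i'.1) :
    mass d M i.1 * ker d (atomPt M i) (atomPt M i') ^ 2 ≤ (weight i.1 * weight i'.1) ^ 2 := by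
  have hle : i'.1 ≤ i.1 := (mass_strictAnti hMd).le_iff_ge.1 hs
  calc _ ≤ 16 * 512⁻¹ ^ i.1 := mass_far hd0 hd2 hMd (far_atom_atom hM hii hle)
    _ ≤ 16 * (256⁻¹) ^ i.1 := by gcongr; norm_num
    _ = (2 * 4⁻¹ ^ i.1 * (2 * 4⁻¹ ^ i.1)) ^ 2 := by
      have : (256⁻¹ : ℝ≥0∞) = 4⁻¹ ^ 4 := by rw [← ENNReal.inv_pow]; norm_num
      rw [this]; ring
    _ ≤ _ := by
      unfold weight
      gcongr ?_ ^ 2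
      refine mul_le_mul' le_rfl (mul_le_mul' le_rfl ?_)
      exact pow_le_pow_right_of_le_one' (by simp) hle

lemma tsum_level (f : ℕ → ℝ≥0∞) :
    ∑' i : Σ j : ℕ, Fin j → Bool, f i.1 = ∑' j, 2 ^ j * f j := by
  rw [ENNReal.tsum_sigma']
  refine tsum_congr fun j => ?_
  rw [tsum_fintype]
  simp

lemma tsum_geom_ne_top {r : ℝ≥0∞} (hr : r < 1) : ∑' j : ℕ, r ^ j ≠ ⊤ := by
  rw [ENNReal.tsum_geometric]
  exact ENNReal.inv_ne_top.2 (tsub_pos_of_lt hr).ne'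

lemma two_mul_inv_lt {n : ℝ≥0∞} (hn : 2 < n) : 2 * n⁻¹ < 1 := by
  rw [← div_eq_mul_inv]
  exact ENNReal.div_lt_of_lt_mul (by simpa using hn)

lemma tsum_level_pow_ne_top {n : ℝ≥0∞} (hn : 2 < n) :
    ∑' i : Σ j : ℕ, Fin j → Bool, n⁻¹ ^ i.1 ≠ ⊤ := by
  rw [tsum_level fun j => n⁻¹ ^ j]
  simp only [← mul_pow]
  exact tsum_geom_ne_top (two_mul_inv_lt hn)

lemma tsum_weight_ne_top : ∑' i : Σ j : ℕ, Fin j → Bool, weight i.1 ≠ ⊤ := by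
  unfold weight
  rw [ENNReal.tsum_mul_left]
  exact ENNReal.mul_ne_top (by norm_num) (tsum_level_pow_ne_top (by norm_num))

lemma tsum_weight_sq_ne_top : ∑' i : Σ j : ℕ, Fin j → Bool, weight i.1 ^ 2 ≠ ⊤ := by
  refine ne_top_of_le_ne_top (ENNReal.mul_ne_top (by norm_num : (2 : ℝ≥0∞) ≠ ⊤) tsum_weight_ne_top)
    (?_ : _ ≤ 2 * ∑' i : Σ j : ℕ, Fin j → Bool, weight i.1)
  rw [← ENNReal.tsum_mul_left]
  refine ENNReal.tsum_le_tsum fun i => ?_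
  rw [sq]
  gcongr
  calc weight i.1 ≤ 2 * 1 := by
        unfold weight; gcongr; exact pow_le_one₀ (by simp) (by simp)
    _ = 2 := mul_one _

/-- The atomic measure `σ`, with one atom for each finite word. -/
def treeMeasure (d : ℝ) (M : ℕ) : Measure Plane :=
  atoms (fun i : Σ j : ℕ, Fin j → Bool => mass d M i.1) (atomPt M)

lemma isFiniteMeasure_treeMeasure {d : ℝ} {M : ℕ} (hMd : 6 ≤ M * d) :
    IsFiniteMeasure (treeMeasure d M) := by
  refine ⟨?_⟩
  rw [treeMeasure, atoms_apply _ _ MeasurableSet.univ]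
  simp only [indicator_univ, Pi.one_apply, mul_one]
  refine lt_of_le_of_lt (ENNReal.tsum_le_tsum fun i => mass_le hMd i.1) ?_
  exact (tsum_level_pow_ne_top (by norm_num)).lt_top

/-- Masses decrease with the generation, so a family of atoms has a heaviest one. -/
lemma exists_max_mass {d : ℝ} {M : ℕ} (hMd : 6 ≤ M * d) (A : Set (Σ j : ℕ, Fin j → Bool))
    (hA : A.Nonempty) : ∃ i ∈ A, ∀ i' ∈ A, mass d M i'.1 ≤ mass d M i.1 := by
  obtain ⟨i, hi, hmin⟩ := exists_minimalFor_of_wellFoundedLT (· ∈ A) Sigma.fst hA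
  refine ⟨i, hi, fun i' hi' => (mass_strictAnti hMd).antitone ?_⟩
  rcases le_total i.1 i'.1 with h | h
  · exact h
  · exact hmin hi' h

/-! ### The primary Muckenhoupt condition -/

/-- A sum of doubling terms `a 2^j`, truncated once they exceed `1`, is bounded by the next term
and by `2`. -/
lemma sum_doubling_le (a : ℝ≥0∞) (n : ℕ) :
    ∑ j ∈ Finset.range n, (if a * 2 ^ j ≤ 1 then a * 2 ^ j else 0) ≤ min 2 (a * 2 ^ n) := by
  induction n with
  | zero => simp
  | succ n ih =>
    rw [Finset.sum_range_succ]
    have h2 : a * 2 ^ n ≤ a * 2 ^ (n + 1) := by gcongr <;> norm_num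
    split_ifs with h
    · have e : a * 2 ^ (n + 1) = a * 2 ^ n + a * 2 ^ n := by ring
      refine le_min ?_ ?_
      · calc _ ≤ 1 + 1 := add_le_add ((ih.trans (min_le_right _ _)).trans h) h
          _ = 2 := one_add_one_eq_two
      · rw [e]
        exact add_le_add (ih.trans (min_le_right _ _)) le_rfl
    · rw [add_zero]
      exact le_min (ih.trans (min_le_left _ _)) ((ih.trans (min_le_right _ _)).trans h2)

lemma tsum_doubling_le (a : ℝ≥0∞) :
    ∑' j : ℕ, (if a * 2 ^ j ≤ 1 then a * 2 ^ j else 0) ≤ 2 := by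
  rw [ENNReal.tsum_eq_iSup_nat]
  exact iSup_le fun n => (sum_doubling_le a n).trans (min_le_left _ _)

/-- The condition `A₂^α(σ, ω)`. Fix a cube `Q` and a word `v` of length `j`. If `Q` contains a
point of the Cantor set outside the cluster of `v`, the atom of `v` contributes a summable amount.
Otherwise `ω(Q) 2^j ≤ 1`, there is one such word per generation, and it contributes at most
`16 ω(Q) 2^j`; these terms sum to at most a constant by `tsum_doubling_le`. -/
lemma muckA2_tree_cantor_ne_top {α : ℝ} (hα0 : 0 ≤ α) (hα2 : α < 2) {M : ℕ} (hM : 2 ≤ M)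
    (hMd : 6 ≤ M * (2 - α)) : muckA2 α (treeMeasure (2 - α) M) (cantorMeasure M) ≠ ⊤ := by
  classical
  have hd0 : 0 ≤ 2 - α := by linarith
  have hd2 : 2 - α ≤ 2 := by linarith
  refine ne_top_of_le_ne_top (b := 16 * ∑' i : Σ j : ℕ, Fin j → Bool, 512⁻¹ ^ i.1 + 16 * 2)
    (ENNReal.add_ne_top.2 ⟨ENNReal.mul_ne_top (by norm_num)
      (tsum_level_pow_ne_top (by norm_num)), by norm_num⟩) ?_
  refine iSup_le fun c => iSup_le fun h => iSup_le fun hh => ?_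
  rw [reprPoisson_div _ hh]
  set Q := cube c h
  have hQ : MeasurableSet Q := measurableSet_cube c h
  set A := cantorPt M ⁻¹' Q
  have hω : cantorMeasure M Q = coin A := Measure.map_apply (measurable_cantorPt hM) hQ
  rw [hω]
  rcases A.eq_empty_or_nonempty with hA | ⟨y0, hy0⟩
  · simp [hA]
  set a := coin A
  have ha1 : a ≤ 1 := prob_le_one
  calc _ ≤ a * ∫⁻ x, (scl c h x ^ (-(2 - α))) ^ 2 ∂(treeMeasure (2 - α) M) := by
        gcongr; exact Measure.restrict_le_self
    _ = ∑' i : Σ j : ℕ, Fin j → Bool,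
          a * (mass (2 - α) M i.1 * (scl c h (atomPt M i) ^ (-(2 - α))) ^ 2) := by
        rw [treeMeasure, lintegral_atoms, ENNReal.tsum_mul_left]
    _ ≤ ∑' i : Σ j : ℕ, Fin j → Bool, (16 * 512⁻¹ ^ i.1 +
          16 * (if i.2 = (fun k : Fin i.1 => y0 k) then (if a * 2 ^ i.1 ≤ 1 then a * 2 ^ i.1 else 0) else 0)) := by
        refine ENNReal.tsum_le_tsum fun i => ?_
        by_cases hsub : A ⊆ cyl i.1 (pad i.2)
        · refine le_trans ?_ le_add_self
          have e : i.2 = fun k : Fin i.1 => y0 k := by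
            ext k
            have := hsub hy0 k k.2
            simp [pad] at this
            exact this.symm
          have ha : a * 2 ^ i.1 ≤ 1 := by
            calc a * 2 ^ i.1 ≤ 2⁻¹ ^ i.1 * 2 ^ i.1 := by
                  gcongr
                  rw [← coin_cyl i.1 (pad i.2)]
                  exact measure_mono hsub
              _ = 1 := by rw [mul_comm, two_mul_inv_pow]
          rw [if_pos e, if_pos ha]
          calc _ ≤ a * (mass (2 - α) M i.1 * ker (2 - α) (atomPt M i) (cantorPt M y0) ^ 2) := by
                gcongr
                exact scl_rpow_le_ker hd0 hy0 _
            _ ≤ a * (16 * 2 ^ i.1) := by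
                exact mul_le_mul' le_rfl (mass_near hd0 hd2 (gap_le_dist_atom_cantor M i y0))
            _ = _ := by ring
        · refine le_trans ?_ le_self_add
          obtain ⟨y, hy, hyc⟩ := not_subset.1 hsub
          calc _ ≤ 1 * (mass (2 - α) M i.1 * ker (2 - α) (atomPt M i) (cantorPt M y) ^ 2) := by
                gcongr
                exact scl_rpow_le_ker hd0 hy _
            _ ≤ _ := by
                rw [one_mul]
                exact mass_far hd0 hd2 hMd (far_atom_cantor hM hyc)
    _ ≤ _ := by
        rw [ENNReal.tsum_add, ENNReal.tsum_mul_left, ENNReal.tsum_mul_left]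
        gcongr
        rw [ENNReal.tsum_sigma']
        refine le_trans (ENNReal.tsum_le_tsum fun j => ?_) (tsum_doubling_le a)
        exact (tsum_ite_eq (fun k : Fin j => y0 k)
          fun _ => if a * 2 ^ j ≤ 1 then a * 2 ^ j else 0).le

/-! ### Off-testing -/

/-- Testing on the cube `[0,4)²`, which carries `ω` and misses all atoms: every atom of
generation `j` contributes at least `2^{-j} / 256`, so each generation contributes `1 / 256`. -/
lemma offTest_tree_cantor {α : ℝ} (hα0 : 0 ≤ α) (hα2 : α < 2) {M : ℕ} (hM : 2 ≤ M) :
    offTest α (treeMeasure (2 - α) M) (cantorMeasure M) = ⊤ := by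
  have hd0 : 0 ≤ 2 - α := by linarith
  have hd2 : 2 - α ≤ 2 := by linarith
  have := isProbabilityMeasure_cantorMeasure hM
  rw [eq_top_iff]
  refine le_trans ?_ (le_iSup_of_le !₂[2, 2] (le_iSup_of_le 2 (le_iSup_of_le two_pos le_rfl)))
  set Q := cube !₂[2, 2] 2 with hQdef
  have hQ : MeasurableSet Q := measurableSet_cube _ _
  have hmem : ∀ b, cantorPt M b ∈ Q := by
    intro b t
    have h0 := cantor_nonneg M b
    have h1 := cantor_le hM b
    fin_cases t <;> (simp [cantorPt]; try constructor) <;> linarith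
  have hnot : ∀ i, atomPt M i ∉ Q := by
    intro i hi
    have := (hi 0).1
    simp [atomPt] at this
    linarith [gap_pos M i.1]
  have hωQ : (cantorMeasure M).restrict Q = cantorMeasure M := by
    rw [Measure.restrict_eq_self_of_ae_mem]
    rw [cantorMeasure, ae_map_iff (p := (· ∈ Q)) (measurable_cantorPt hM).aemeasurable hQ]
    exact Filter.Eventually.of_forall hmem
  have hone : cantorMeasure M Q = 1 := by
    rw [← Measure.restrict_apply_univ, hωQ, measure_univ]
  have inner : ∀ i, 2⁻¹ ^ i.1 * (gapPow (2 - α) M i.1)⁻¹ ≤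
      16 * ∫⁻ y in Q, ENNReal.ofReal (dist (atomPt M i) y ^ (α - 2)) ∂(cantorMeasure M) := by
    intro i
    have hK : MeasurableSet (cyl i.1 (pad i.2)) := measurableSet_cyl _ _
    have mk := measurable_ker (2 - α) (atomPt M i)
    have mkc : Measurable fun b => ker (2 - α) (atomPt M i) (cantorPt M b) :=
      mk.comp (measurable_cantorPt hM)
    have e : ∫⁻ y in Q, ENNReal.ofReal (dist (atomPt M i) y ^ (α - 2)) ∂(cantorMeasure M) =
        ∫⁻ y in Q, ker (2 - α) (atomPt M i) y ∂(cantorMeasure M) := by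
      refine setLIntegral_congr_fun hQ fun y hy => ?_
      have hpos : 0 < dist (atomPt M i) y := dist_pos.2 fun h => hnot i (h ▸ hy)
      simp only [ker]
      rw [edist_dist, ENNReal.ofReal_rpow_of_pos hpos, neg_sub]
    rw [e, hωQ, lintegral_cantorMeasure hM mk,
      ← lintegral_const_mul _ mkc]
    calc _ = ∫⁻ b in cyl i.1 (pad i.2), (gapPow (2 - α) M i.1)⁻¹ ∂coin := by
          rw [setLIntegral_const, coin_cyl, mul_comm]
      _ ≤ ∫⁻ b in cyl i.1 (pad i.2), 16 * ker (2 - α) (atomPt M i) (cantorPt M b) ∂coin :=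
          setLIntegral_mono' hK fun b hb => le_ker_of_gap hd0 hd2 (near_atom_cantor hM hb)
      _ ≤ _ := setLIntegral_le_lintegral _ _
  rw [hone, inv_one, one_mul, treeMeasure, setLIntegral_atoms _ _ _ hQ.compl]
  have hlow : ∀ i : Σ j : ℕ, Fin j → Bool, 2⁻¹ ^ i.1 ≤ 256 * (mass (2 - α) M i.1 *
      Qᶜ.indicator (fun x => (∫⁻ y in Q, ENNReal.ofReal (dist x y ^ (α - 2))
        ∂(cantorMeasure M)) ^ 2) (atomPt M i)) := by
    intro i
    rw [indicator_of_mem (hnot i)]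
    calc (2⁻¹ : ℝ≥0∞) ^ i.1 = 2⁻¹ ^ i.1 * (2 ^ i.1 * 2⁻¹ ^ i.1) *
          (gapPow (2 - α) M i.1 * (gapPow (2 - α) M i.1)⁻¹) ^ 2 := by
          rw [ENNReal.mul_inv_cancel (gapPow_ne_zero _ _ _) (gapPow_ne_top _ _ _),
            two_mul_inv_pow]
          simp
      _ = mass (2 - α) M i.1 * (2⁻¹ ^ i.1 * (gapPow (2 - α) M i.1)⁻¹) ^ 2 := by
          rw [mass]; ring
      _ ≤ mass (2 - α) M i.1 * (16 * ∫⁻ y in Q, ENNReal.ofReal (dist (atomPt M i) y ^ (α - 2))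
            ∂(cantorMeasure M)) ^ 2 := by
          exact mul_le_mul' le_rfl (pow_le_pow_left' (inner i) 2)
      _ = _ := by ring
  have htop : ∑' i : Σ j : ℕ, Fin j → Bool, (2⁻¹ : ℝ≥0∞) ^ i.1 = ⊤ := by
    rw [tsum_level fun j => 2⁻¹ ^ j]
    simp only [two_mul_inv_pow]
    exact ENNReal.tsum_const_eq_top_of_ne_zero one_ne_zero
  have := ENNReal.tsum_le_tsum hlow
  rw [htop, ENNReal.tsum_mul_left, top_le_iff, ENNReal.mul_eq_top] at this
  rcases this with h | h
  · exact h.2.ge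
  · exact absurd h.1 (by norm_num)

end Construction

/-- For every `0 ≤ α < 2` there is a pair of locally finite positive Borel measures on `ℝ²`
whose Muckenhoupt `A₂^α, A₂^{α,*}` and energy `E₂^α, E₂^{α,*}` constants are finite, but whose
fractional off-testing constant `T_{off,α}` is infinite. -/
theorem offTesting_not_controlled_by_A2_and_energy (α : ℝ) (hα0 : 0 ≤ α) (hα2 : α < 2) :
    ∃ σ ω : Measure Plane, IsLocallyFiniteMeasure σ ∧ IsLocallyFiniteMeasure ω ∧
      muckA2 α σ ω ≠ ⊤ ∧ muckA2 α ω σ ≠ ⊤ ∧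
      energyConst α σ ω ≠ ⊤ ∧ energyConst α ω σ ≠ ⊤ ∧
      offTest α σ ω = ⊤ := by
  have hd : 0 < 2 - α := by linarith
  -- any `M` with `2 ≤ M` and `6 ≤ M (2 - α)` separates the generations enough
  obtain ⟨N, hN⟩ := exists_nat_ge (6 / (2 - α))
  set M := N + 2
  have hM : 2 ≤ M := by omega
  have hMd : 6 ≤ M * (2 - α) := by
    rw [div_le_iff₀ hd] at hN
    simp only [M]
    push_cast
    nlinarith
  have hω := isProbabilityMeasure_cantorMeasure hM
  have hσ : IsFiniteMeasure (treeMeasure (2 - α) M) := isFiniteMeasure_treeMeasure hMd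
  have : IsFiniteMeasure (atoms (fun i : Σ j : ℕ, Fin j → Bool => mass (2 - α) M i.1)
    (atomPt M)) := hσ
  have H1 := mass_integral_le hd.le (by linarith) hM hMd
  have H2 := mass_pair_le hd.le (by linarith) hM hMd
  have Hmax := exists_max_mass hMd
  have T1 := tsum_weight_ne_top
  have T2 := tsum_weight_sq_ne_top
  have w0 : ∀ i : Σ j : ℕ, Fin j → Bool, weight i.1 ≠ 0 := fun i => by simp [weight]
  have w1 : ∀ i : Σ j : ℕ, Fin j → Bool, weight i.1 ≠ ⊤ := fun i =>
    ENNReal.ne_top_of_tsum_ne_top T1 i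
  refine ⟨treeMeasure (2 - α) M, cantorMeasure M, inferInstance, inferInstance,
    muckA2_tree_cantor_ne_top hα0 hα2 hM hMd, ?_, ?_, ?_, offTest_tree_cantor hα0 hα2 hM⟩
  · refine ne_top_of_le_ne_top ?_ (muckA2_atoms_le hα0 hα2.le Hmax 32 H1 H2)
    finiteness
  · refine ne_top_of_le_ne_top ?_ (energyConst_le_of_testing hα2.le _ _ _ fun c h _ =>
      testing_atoms hd.le (by linarith) 32 H1 H2 w0 w1 c h)
    finiteness
  · refine ne_top_of_le_ne_top ?_ (energyConst_atoms_le hα0 hα2.le Hmax H2)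
    finiteness
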